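/- For all integers l ≥ 0 and complex α, β with Re(α) > -1/2 and Re(β) > -1/2, the integral ∫_{-1}^{1} (P_l^{(α,β)}(t))^2 (1-t)^{2α} (1+t)^{2β} dt equals 2^{2α+2β+1} · (1/2)_l / (l!)^2 · B(2α+1, 2β+1) · (α+1)_l (β+1)_l / (α+β+3/2)_l, where (a)_k denotes the rising factorial (Pochhammer symbol) and B is the Beta function. -/

import Mathlib

open MeasureTheory intervalIntegral

noncomputable def ascPoch (a : ℂ) (k : ℕ) : ℂ := (ascPochhammer ℂ k).eval a

noncomputable def betaFn (a b : ℂ) : ℂ := Complex.Gamma a * Complex.Gamma b / Complex.Gamma (a + b)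

/-- Jacobi polynomial via Rodrigues' formula, as a function of a real variable. -/
noncomputable def jacobiP (l : ℕ) (α β : ℂ) (t : ℝ) : ℂ :=
  ((-1 : ℂ) ^ l / (2 ^ l * (l.factorial : ℂ))) * (1 - (t : ℂ)) ^ (-α) * (1 + (t : ℂ)) ^ (-β) *
    iteratedDeriv l (fun s : ℝ => (1 - (s : ℂ)) ^ ((l : ℂ) + α) * (1 + (s : ℂ)) ^ ((l : ℂ) + β)) t

/-! For a solution `p` of Jacobi's differential equation, a certain quadratic form in `p` and `p'`,
multiplied by `(1 - t) ^ (2 * α + 1) * (1 + t) ^ (2 * β + 1)`, is a primitive of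
`(1 - t) ^ (2 * α) * (1 + t) ^ (2 * β)` times a linear combination of `p ^ 2` and
`((1 - t ^ 2) * p') ^ 2`. This primitive vanishes at `±1`, so the weighted integrals of these two
squares are proportional. The derivative of `P_{l+1}^{(α, β)}` is a multiple of `P_l^{(α+1, β+1)}`,
so this is a recurrence from `(l, α + 1, β + 1)` to `(l + 1, α, β)`. The closed form satisfies the
same recurrence, and for `l = 0` the integral is a Beta integral. -/

open Polynomial Set

section WeightedDerivative

variable {R : Type*} [CommRing R]

/-- The first-order operator on polynomials satisfying
`((1 - t) ^ a (1 + t) ^ b Q)' = (1 - t) ^ (a - 1) (1 + t) ^ (b - 1) weightedDerivative a b Q`. -/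
noncomputable def weightedDerivative (a b : R) (Q : R[X]) : R[X] :=
  (1 - X ^ 2) * derivative Q + (C b * (1 - X) - C a * (1 + X)) * Q

lemma weightedDerivative_C_mul (a b c : R) (Q : R[X]) :
    weightedDerivative a b (C c * Q) = C c * weightedDerivative a b Q := by
  simp only [weightedDerivative, derivative_C_mul]
  ring

/-- The polynomial factor of the `k`-th derivative of `(1 - t) ^ a (1 + t) ^ b`, the remaining
factor being `(1 - t) ^ (a - k) (1 + t) ^ (b - k)`. -/
noncomputable def rodriguesPoly (a b : R) : ℕ → R[X]
  | 0 => 1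
  | k + 1 => weightedDerivative (a - k) (b - k) (rodriguesPoly a b k)

lemma derivative_rodriguesPoly_succ (a b : R) (k : ℕ) :
    derivative (rodriguesPoly a b (k + 1)) =
      C ((k + 1) * (k - (a + b))) * rodriguesPoly a b k := by
  induction k with
  | zero =>
    simp only [rodriguesPoly, weightedDerivative, derivative_one, mul_zero, Nat.cast_zero, sub_zero,
      mul_one, zero_add, derivative_sub, derivative_mul, derivative_C, zero_mul, derivative_X,
      zero_sub, mul_neg, neg_add_rev, one_mul, map_add, map_neg]
    ring
  | succ k ih =>
    have hrec : rodriguesPoly a b (k + 1) =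
        weightedDerivative (a - k) (b - k) (rodriguesPoly a b k) := rfl
    rw [rodriguesPoly, weightedDerivative, ih]
    simp only [weightedDerivative, derivative_mul, derivative_C, derivative_natCast,
      derivative_X, derivative_one, derivative_X_pow, ih, map_mul, map_add, map_sub, map_one,
      map_natCast, Nat.cast_add, Nat.cast_one] at hrec ⊢
    linear_combination (-((k : R[X]) + 1) * (k - (C a + C b))) * hrec

/-- Jacobi's differential equation in Sturm–Liouville form. -/
lemma weightedDerivative_derivative_rodriguesPoly (a b : R) (k : ℕ) :
    weightedDerivative (a - k) (b - k) (derivative (rodriguesPoly a b (k + 1))) =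
      C ((k + 1) * (k - (a + b))) * rodriguesPoly a b (k + 1) := by
  rw [derivative_rodriguesPoly_succ, weightedDerivative_C_mul, rodriguesPoly]

/-- A polynomial whose weighted derivative compares `p ^ 2` with `((1 - X ^ 2) * derivative p) ^ 2`
when `p` solves Jacobi's equation with eigenvalue `μ`. It is found by undetermined coefficients
among the quadratic forms in `p` and `derivative p`. -/
noncomputable def jacobiPrimitive (α β μ : R) (p : R[X]) : R[X] :=
  (1 - X ^ 2) *
      (C ((1 + α + β) * (3 + 2 * (α + β))) * derivative p *
        ((C (2 + α + β) * X - C (β - α)) * derivative p - C (2 * μ) * p))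
    - C (2 * μ) * (C (1 + α + β) * X + C (β - α)) *
        (C μ * p ^ 2 + (1 - X ^ 2) * derivative p ^ 2)

lemma weightedDerivative_jacobiPrimitive {α β μ : R} {p : R[X]}
    (hp : weightedDerivative (α + 1) (β + 1) (derivative p) = -(C μ * p)) :
    weightedDerivative (2 * α + 1) (2 * β + 1) (jacobiPrimitive α β μ p) =
      C (4 * (2 * α + 1) * (2 * β + 1) * μ ^ 2) * p ^ 2
        - C ((1 + α + β) * (2 + α + β) * (4 * μ - 2 * (α + β) - 3))
          * ((1 - X ^ 2) ^ 2 * derivative p ^ 2) := by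
  simp only [weightedDerivative, jacobiPrimitive, derivative_mul, derivative_C, derivative_X,
    derivative_one, derivative_sq, map_mul, map_add, map_sub, map_one, map_pow,
    map_ofNat, derivative_ofNat] at hp ⊢
  linear_combination (-(2 * (1 + C α + C β) * (3 + 2 * (C α + C β)) * C μ * (1 - X ^ 2) * p)
    - 2 * (2 * C μ * ((1 + C α + C β) * X + (C β - C α))
      - (1 + C α + C β) * (3 + 2 * (C α + C β)) * ((2 + C α + C β) * X - (C β - C α)))
        * (1 - X ^ 2) * derivative p) * hp

end WeightedDerivative

section JacobiWeight

/-- The Jacobi weight `(1 - t) ^ a (1 + t) ^ b` with complex exponents, meant for `t ∈ [-1, 1]`. -/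
noncomputable def jacobiWeight (a b : ℂ) (t : ℝ) : ℂ :=
  (1 - (t : ℂ)) ^ a * (1 + (t : ℂ)) ^ b

lemma one_sub_ofReal_mem_slitPlane {t : ℝ} (ht : t < 1) : 1 - (t : ℂ) ∈ Complex.slitPlane := by
  exact_mod_cast Complex.ofReal_mem_slitPlane.2 (sub_pos.2 ht)

lemma one_add_ofReal_mem_slitPlane {t : ℝ} (ht : -1 < t) : 1 + (t : ℂ) ∈ Complex.slitPlane := by
  exact_mod_cast Complex.ofReal_mem_slitPlane.2 (neg_lt_iff_pos_add'.1 ht)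

lemma jacobiWeight_add (a b c d : ℂ) {t : ℝ} (ht : t ∈ Ioo (-1) 1) :
    jacobiWeight (a + c) (b + d) t = jacobiWeight a b t * jacobiWeight c d t := by
  simp only [jacobiWeight]
  rw [Complex.cpow_add _ _ (Complex.slitPlane_ne_zero (one_sub_ofReal_mem_slitPlane ht.2)),
    Complex.cpow_add _ _ (Complex.slitPlane_ne_zero (one_add_ofReal_mem_slitPlane ht.1))]
  ring

lemma jacobiWeight_add_one (a b : ℂ) {t : ℝ} (ht : t ∈ Ioo (-1) 1) :
    jacobiWeight (a + 1) (b + 1) t = jacobiWeight a b t * (1 - (t : ℂ) ^ 2) := by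
  rw [jacobiWeight_add a b 1 1 ht, jacobiWeight, jacobiWeight, Complex.cpow_one, Complex.cpow_one]
  ring

lemma continuous_jacobiWeight {a b : ℂ} (ha : 0 < a.re) (hb : 0 < b.re) :
    Continuous (jacobiWeight a b) := by
  have hleft := (Complex.continuous_ofReal_cpow_const ha).comp (continuous_sub_left (1 : ℝ))
  have hright := (Complex.continuous_ofReal_cpow_const hb).comp (continuous_const_add (1 : ℝ))
  convert hleft.mul hright using 1
  ext t
  simp [jacobiWeight]

lemma hasDerivAt_jacobiWeight_mul_eval (a b : ℂ) (Q : ℂ[X]) {t : ℝ} (ht : t ∈ Ioo (-1) 1) :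
    HasDerivAt (fun s : ℝ => jacobiWeight a b s * Q.eval (s : ℂ))
      (jacobiWeight (a - 1) (b - 1) t * (weightedDerivative a b Q).eval (t : ℂ)) t := by
  have hl := one_sub_ofReal_mem_slitPlane ht.2
  have hr := one_add_ofReal_mem_slitPlane ht.1
  have hleft : HasDerivAt (fun z : ℂ => (1 - z) ^ a) (a * (1 - (t : ℂ)) ^ (a - 1) * (-1)) t :=
    ((hasDerivAt_id (t : ℂ)).const_sub 1).cpow_const hl
  have hright : HasDerivAt (fun z : ℂ => (1 + z) ^ b) (b * (1 + (t : ℂ)) ^ (b - 1) * 1) t :=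
    ((hasDerivAt_id (t : ℂ)).const_add 1).cpow_const hr
  have hleft_pow : (1 - (t : ℂ)) ^ a = (1 - (t : ℂ)) ^ (a - 1) * (1 - t) := by
    simpa using Complex.cpow_add (a - 1) 1 (Complex.slitPlane_ne_zero hl)
  have hright_pow : (1 + (t : ℂ)) ^ b = (1 + (t : ℂ)) ^ (b - 1) * (1 + t) := by
    simpa using Complex.cpow_add (b - 1) 1 (Complex.slitPlane_ne_zero hr)
  refine ((hleft.mul hright).mul (Q.hasDerivAt (t : ℂ))).comp_ofReal.congr_deriv ?_
  simp only [Pi.mul_apply, jacobiWeight, weightedDerivative, eval_add, eval_mul, eval_sub, eval_pow,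
    eval_one, eval_X, eval_C, hleft_pow, hright_pow]
  ring

lemma iteratedDeriv_jacobiWeight (a b : ℂ) (k : ℕ) {t : ℝ} (ht : t ∈ Ioo (-1) 1) :
    iteratedDeriv k (jacobiWeight a b) t =
      jacobiWeight (a - k) (b - k) t * (rodriguesPoly a b k).eval (t : ℂ) := by
  induction k generalizing t with
  | zero => simp [rodriguesPoly]
  | succ k ih =>
    have hk : iteratedDeriv k (jacobiWeight a b) =ᶠ[nhds t]
        fun s : ℝ => jacobiWeight (a - k) (b - k) s * (rodriguesPoly a b k).eval (s : ℂ) :=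
      Filter.eventuallyEq_of_mem (Ioo_mem_nhds ht.1 ht.2) fun s hs => ih hs
    rw [iteratedDeriv_succ, hk.deriv_eq, (hasDerivAt_jacobiWeight_mul_eval _ _ _ ht).deriv,
      rodriguesPoly, sub_sub, sub_sub, Nat.cast_succ]

lemma jacobiWeight_two_mul_sub_one (a b : ℂ) {x : ℝ} (hx : x ∈ Icc 0 1) :
    jacobiWeight a b (2 * x - 1) = 2 ^ (a + b) * ((x : ℂ) ^ b * (1 - (x : ℂ)) ^ a) := by
  have hleft : (1 - ((2 * x - 1 : ℝ) : ℂ)) ^ a = 2 ^ a * (1 - (x : ℂ)) ^ a := by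
    rw [← Complex.ofReal_one, ← Complex.ofReal_ofNat, ← Complex.ofReal_sub, ← Complex.ofReal_sub,
      ← Complex.mul_cpow_ofReal_nonneg zero_le_two (sub_nonneg.2 hx.2)]
    push_cast
    ring_nf
  have hright : (1 + ((2 * x - 1 : ℝ) : ℂ)) ^ b = 2 ^ b * (x : ℂ) ^ b := by
    rw [← Complex.ofReal_ofNat, ← Complex.mul_cpow_ofReal_nonneg zero_le_two hx.1]
    push_cast
    ring_nf
  rw [jacobiWeight, hleft, hright, Complex.cpow_add _ _ two_ne_zero]
  ring

lemma intervalIntegrable_jacobiWeight {a b : ℂ} (ha : -1 < a.re) (hb : -1 < b.re) :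
    IntervalIntegrable (jacobiWeight a b) volume (-1) 1 := by
  have hbeta : IntervalIntegrable (fun x : ℝ => (x : ℂ) ^ b * (1 - (x : ℂ)) ^ a) volume 0 1 := by
    have := Complex.betaIntegral_convergent (u := b + 1) (v := a + 1)
      (by simpa using neg_lt_iff_pos_add.1 hb) (by simpa using neg_lt_iff_pos_add.1 ha)
    simpa only [add_sub_cancel_right] using this
  have hpull : IntervalIntegrable (fun x : ℝ => jacobiWeight a b (2 * x - 1)) volume 0 1 :=
    (hbeta.const_mul (2 ^ (a + b))).congr_uIoo fun x hx =>
      (jacobiWeight_two_mul_sub_one a b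
        (Ioo_subset_Icc_self (by simpa only [uIoo_of_le zero_le_one] using hx))).symm
  have htwo : (2 : ℝ) - 1 = 1 := by norm_num
  simpa [mul_add, htwo] using (hpull.comp_mul_left (c := 2⁻¹)).comp_add_right 1

lemma integral_jacobiWeight {a b : ℂ} (ha : -1 < a.re) (hb : -1 < b.re) :
    ∫ t in (-1 : ℝ)..1, jacobiWeight a b t = 2 ^ (a + b + 1) * betaFn (a + 1) (b + 1) := by
  have hbeta : ∫ x in (0 : ℝ)..1, (x : ℂ) ^ b * (1 - (x : ℂ)) ^ a = betaFn (a + 1) (b + 1) := by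
    have := Complex.betaIntegral_eq_Gamma_mul_div (a + 1) (b + 1)
      (by simpa using neg_lt_iff_pos_add.1 ha) (by simpa using neg_lt_iff_pos_add.1 hb)
    rw [betaFn, ← this, ← Complex.betaIntegral_symm, Complex.betaIntegral]
    simp only [add_sub_cancel_right]
  calc ∫ t in (-1 : ℝ)..1, jacobiWeight a b t
      = (2 : ℝ) • ∫ x in (0 : ℝ)..1, jacobiWeight a b (2 * x - 1) := by
        rw [intervalIntegral.smul_integral_comp_mul_sub]; norm_num
    _ = (2 : ℝ) • ∫ x in (0 : ℝ)..1, 2 ^ (a + b) * ((x : ℂ) ^ b * (1 - (x : ℂ)) ^ a) := by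
        congr 1
        refine intervalIntegral.integral_congr fun x hx => ?_
        exact jacobiWeight_two_mul_sub_one a b (by simpa only [uIcc_of_le zero_le_one] using hx)
    _ = 2 ^ (a + b + 1) * betaFn (a + 1) (b + 1) := by
        rw [intervalIntegral.integral_const_mul, hbeta, Complex.cpow_add (a + b) 1 two_ne_zero,
          Complex.cpow_one, Complex.real_smul, Complex.ofReal_ofNat]
        ring

end JacobiWeight

section JacobiIntegral

/-- Integration of polynomials over `[-1, 1]` against the Jacobi weight. -/
noncomputable def jacobiIntegral (a b : ℂ) (Q : ℂ[X]) : ℂ :=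
  ∫ t in (-1 : ℝ)..1, jacobiWeight a b t * Q.eval (t : ℂ)

lemma intervalIntegrable_jacobiWeight_mul_eval {a b : ℂ} (ha : -1 < a.re) (hb : -1 < b.re)
    (Q : ℂ[X]) :
    IntervalIntegrable (fun t : ℝ => jacobiWeight a b t * Q.eval (t : ℂ)) volume (-1) 1 :=
  (intervalIntegrable_jacobiWeight ha hb).mul_continuousOn
    (Q.continuous.comp Complex.continuous_ofReal).continuousOn

lemma jacobiIntegral_one {a b : ℂ} (ha : -1 < a.re) (hb : -1 < b.re) :
    jacobiIntegral a b 1 = 2 ^ (a + b + 1) * betaFn (a + 1) (b + 1) := by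
  simp only [jacobiIntegral, eval_one, mul_one, integral_jacobiWeight ha hb]

lemma jacobiIntegral_C_mul (a b c : ℂ) (Q : ℂ[X]) :
    jacobiIntegral a b (C c * Q) = c * jacobiIntegral a b Q := by
  simp only [jacobiIntegral, eval_mul, eval_C, mul_left_comm _ c,
    intervalIntegral.integral_const_mul]

lemma jacobiIntegral_sub {a b : ℂ} (ha : -1 < a.re) (hb : -1 < b.re) (P Q : ℂ[X]) :
    jacobiIntegral a b (P - Q) = jacobiIntegral a b P - jacobiIntegral a b Q := by
  simp only [jacobiIntegral, eval_sub, mul_sub]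
  exact intervalIntegral.integral_sub (intervalIntegrable_jacobiWeight_mul_eval ha hb P)
    (intervalIntegrable_jacobiWeight_mul_eval ha hb Q)

lemma jacobiIntegral_one_sub_sq_mul (a b : ℂ) (Q : ℂ[X]) :
    jacobiIntegral a b ((1 - X ^ 2) * Q) = jacobiIntegral (a + 1) (b + 1) Q := by
  refine intervalIntegral.integral_congr_Ioo_of_le (by norm_num) fun t ht => ?_
  simp only [jacobiWeight_add_one a b ht, eval_mul, eval_sub, eval_one, eval_pow, eval_X, mul_assoc]

lemma jacobiIntegral_weightedDerivative {a b : ℂ} (ha : 0 < a.re) (hb : 0 < b.re) (Q : ℂ[X]) :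
    jacobiIntegral (a - 1) (b - 1) (weightedDerivative a b Q) = 0 := by
  have hcont : Continuous fun t : ℝ => jacobiWeight a b t * Q.eval (t : ℂ) :=
    (continuous_jacobiWeight ha hb).mul (Q.continuous.comp Complex.continuous_ofReal)
  have hint := intervalIntegrable_jacobiWeight_mul_eval (a := a - 1) (b := b - 1)
    (by simpa using ha) (by simpa using hb) (weightedDerivative a b Q)
  have hleft : jacobiWeight a b (-1) = 0 := by
    simp [jacobiWeight, Complex.zero_cpow (Complex.ne_zero_of_re_pos hb)]
  have hright : jacobiWeight a b 1 = 0 := by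
    simp [jacobiWeight, Complex.zero_cpow (Complex.ne_zero_of_re_pos ha)]
  rw [jacobiIntegral, intervalIntegral.integral_eq_sub_of_hasDerivAt_of_le (by norm_num)
    hcont.continuousOn (fun t ht => hasDerivAt_jacobiWeight_mul_eval a b Q ht) hint, hleft, hright,
    zero_mul, zero_mul, sub_zero]

lemma jacobiIntegral_sq_of_jacobi_equation {α β μ : ℂ} (hα : -1 / 2 < α.re) (hβ : -1 / 2 < β.re)
    {p : ℂ[X]} (hp : weightedDerivative (α + 1) (β + 1) (derivative p) = -(C μ * p)) :
    4 * (2 * α + 1) * (2 * β + 1) * μ ^ 2 * jacobiIntegral (2 * α) (2 * β) (p ^ 2) =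
      (1 + α + β) * (2 + α + β) * (4 * μ - 2 * (α + β) - 3) *
        jacobiIntegral (2 * (α + 1)) (2 * (β + 1)) (derivative p ^ 2) := by
  have hexact := jacobiIntegral_weightedDerivative (a := 2 * α + 1) (b := 2 * β + 1)
    (by simp; linarith) (by simp; linarith) (jacobiPrimitive α β μ p)
  have hshift : jacobiIntegral (2 * α) (2 * β) ((1 - X ^ 2) ^ 2 * derivative p ^ 2) =
      jacobiIntegral (2 * (α + 1)) (2 * (β + 1)) (derivative p ^ 2) := by
    rw [sq (1 - X ^ 2), mul_assoc, jacobiIntegral_one_sub_sq_mul, jacobiIntegral_one_sub_sq_mul]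
    congr 1 <;> ring
  rwa [weightedDerivative_jacobiPrimitive hp, add_sub_cancel_right, add_sub_cancel_right,
    jacobiIntegral_sub (by simp; linarith) (by simp; linarith), jacobiIntegral_C_mul,
    jacobiIntegral_C_mul, hshift, sub_eq_zero] at hexact

end JacobiIntegral

section JacobiPolynomial

/-- The Jacobi polynomial `P_l^{(α, β)}` as a formal polynomial; unlike `jacobiP`, whose Rodrigues
formula only makes sense on `(-1, 1)`, it is meaningful everywhere. -/
noncomputable def jacobiPoly (l : ℕ) (α β : ℂ) : ℂ[X] :=
  C ((-1) ^ l / (2 ^ l * (l.factorial : ℂ))) * rodriguesPoly (l + α) (l + β) l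

lemma jacobiP_eq_eval_jacobiPoly (l : ℕ) (α β : ℂ) {t : ℝ} (ht : t ∈ Ioo (-1) 1) :
    jacobiP l α β t = (jacobiPoly l α β).eval (t : ℂ) := by
  have hrodrigues := iteratedDeriv_jacobiWeight (l + α) (l + β) l ht
  rw [add_sub_cancel_left, add_sub_cancel_left] at hrodrigues
  have hcancel : (1 - (t : ℂ)) ^ (-α) * (1 + (t : ℂ)) ^ (-β) * jacobiWeight α β t = 1 := by
    have := jacobiWeight_add (-α) (-β) α β ht
    simpa [jacobiWeight] using this.symm
  calc jacobiP l α β t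
      = (-1) ^ l / (2 ^ l * (l.factorial : ℂ)) * (1 - (t : ℂ)) ^ (-α) * (1 + (t : ℂ)) ^ (-β) *
          iteratedDeriv l (jacobiWeight (l + α) (l + β)) t := rfl
    _ = (jacobiPoly l α β).eval (t : ℂ) := by
        rw [hrodrigues, jacobiPoly, eval_mul, eval_C]
        linear_combination (-1) ^ l / (2 ^ l * (l.factorial : ℂ)) *
          (rodriguesPoly (l + α) (l + β) l).eval (t : ℂ) * hcancel

lemma derivative_jacobiPoly_succ (l : ℕ) (α β : ℂ) :
    derivative (jacobiPoly (l + 1) α β) =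
      C ((l + α + β + 2) / 2) * jacobiPoly l (α + 1) (β + 1) := by
  have hl : (l : ℂ) + 1 ≠ 0 := l.cast_add_one_ne_zero
  have hα : ((l + 1 : ℕ) : ℂ) + α = l + (α + 1) := by push_cast; ring
  have hβ : ((l + 1 : ℕ) : ℂ) + β = l + (β + 1) := by push_cast; ring
  rw [jacobiPoly, jacobiPoly, hα, hβ, derivative_C_mul, derivative_rodriguesPoly_succ, ← mul_assoc,
    ← mul_assoc, ← C_mul, ← C_mul, Nat.factorial_succ]
  congr 2
  push_cast
  field_simp
  ring

lemma jacobiPoly_succ_jacobi_equation (l : ℕ) (α β : ℂ) :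
    weightedDerivative (α + 1) (β + 1) (derivative (jacobiPoly (l + 1) α β)) =
      -(C ((l + 1) * (l + α + β + 2)) * jacobiPoly (l + 1) α β) := by
  have h := weightedDerivative_derivative_rodriguesPoly (((l + 1 : ℕ) : ℂ) + α)
    (((l + 1 : ℕ) : ℂ) + β) l
  have hα : ((l + 1 : ℕ) : ℂ) + α - l = α + 1 := by push_cast; ring
  have hβ : ((l + 1 : ℕ) : ℂ) + β - l = β + 1 := by push_cast; ring
  have hμ : ((l : ℂ) + 1) * (l - (((l + 1 : ℕ) : ℂ) + α + (((l + 1 : ℕ) : ℂ) + β))) =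
      -((l + 1) * (l + α + β + 2)) := by push_cast; ring
  rw [hα, hβ, hμ] at h
  rw [jacobiPoly, derivative_C_mul, weightedDerivative_C_mul, h, C_neg]
  ring

lemma jacobiIntegral_jacobiPoly_succ_sq (l : ℕ) {α β : ℂ}
    (hα : -1 / 2 < α.re) (hβ : -1 / 2 < β.re) :
    16 * (2 * α + 1) * (2 * β + 1) * (l + 1) ^ 2 *
        jacobiIntegral (2 * α) (2 * β) (jacobiPoly (l + 1) α β ^ 2) =
      (1 + α + β) * (2 + α + β) * (2 * l + 1) * (2 * l + 2 * (α + β) + 5) *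
        jacobiIntegral (2 * (α + 1)) (2 * (β + 1)) (jacobiPoly l (α + 1) (β + 1) ^ 2) := by
  have hne : (l : ℂ) + α + β + 2 ≠ 0 := Complex.ne_zero_of_re_pos (by
    simp only [Complex.add_re, Complex.natCast_re, Complex.re_ofNat]
    linarith [l.cast_nonneg (α := ℝ)])
  have h := jacobiIntegral_sq_of_jacobi_equation hα hβ (jacobiPoly_succ_jacobi_equation l α β)
  rw [derivative_jacobiPoly_succ, mul_pow (C _), ← C_pow, jacobiIntegral_C_mul] at h
  refine mul_left_cancel₀ (pow_ne_zero 2 hne) ?_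
  linear_combination 4 * h

end JacobiPolynomial

section ClosedForm

lemma ascPoch_succ_left (a : ℂ) (n : ℕ) : ascPoch a (n + 1) = a * ascPoch (a + 1) n := by
  simp [ascPoch, ascPochhammer_succ_left]

lemma ascPoch_succ_right (a : ℂ) (n : ℕ) : ascPoch a (n + 1) = ascPoch a n * (a + n) :=
  ascPochhammer_succ_eval n a

lemma mul_ascPoch_add_two (a : ℂ) (n : ℕ) :
    a * (a + 1) * ascPoch (a + 2) n = ascPoch a (n + 1) * (a + n + 1) := by
  have h := ascPoch_succ_right a (n + 1)
  rw [ascPoch_succ_left, ascPoch_succ_left, add_assoc a 1 1, one_add_one_eq_two] at h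
  push_cast at h
  linear_combination h

lemma ascPoch_ne_zero {a : ℂ} (ha : 0 < a.re) (n : ℕ) : ascPoch a n ≠ 0 := by
  rw [ascPoch, Ne, ascPochhammer_eval_eq_zero_iff]
  rintro ⟨k, -, hk⟩
  have hre : (k : ℝ) = -a.re := by simpa using congrArg Complex.re hk
  linarith [k.cast_nonneg (α := ℝ)]

lemma betaFn_add_one_add_one {a b : ℂ} (ha : a ≠ 0) (hb : b ≠ 0) (hab : a + b ≠ 0)
    (hab' : a + b + 1 ≠ 0) :
    (a + b) * (a + b + 1) * betaFn (a + 1) (b + 1) = a * b * betaFn a b := by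
  have hsum : a + 1 + (b + 1) = a + b + 1 + 1 := by ring
  rw [betaFn, betaFn, hsum, Complex.Gamma_add_one a ha, Complex.Gamma_add_one b hb,
    Complex.Gamma_add_one _ hab', Complex.Gamma_add_one _ hab]
  field_simp

lemma betaFn_add_two_add_two {a b : ℂ} (ha : 0 < a.re) (hb : 0 < b.re) :
    (a + b) * (a + b + 1) * (a + b + 2) * (a + b + 3) * betaFn (a + 2) (b + 2) =
      a * (a + 1) * b * (b + 1) * betaFn a b := by
  have hone : ∀ {z : ℂ}, 0 < z.re → 0 < (z + 1).re := fun hz => by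
    simpa using add_pos hz one_pos
  have hab : 0 < (a + b).re := add_pos ha hb
  have h₁ := betaFn_add_one_add_one (Complex.ne_zero_of_re_pos ha) (Complex.ne_zero_of_re_pos hb)
    (Complex.ne_zero_of_re_pos hab) (Complex.ne_zero_of_re_pos (hone hab))
  have hab₂ : 0 < (a + 1 + (b + 1)).re := add_pos (hone ha) (hone hb)
  have h₂ := betaFn_add_one_add_one (Complex.ne_zero_of_re_pos (hone ha))
    (Complex.ne_zero_of_re_pos (hone hb)) (Complex.ne_zero_of_re_pos hab₂)
    (Complex.ne_zero_of_re_pos (hone hab₂))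
  rw [add_assoc a 1 1, add_assoc b 1 1, one_add_one_eq_two] at h₂
  linear_combination (a + b) * (a + b + 1) * h₂ + (a + 1) * (b + 1) * h₁

lemma betaFn_mul_ascPoch_add_two (l : ℕ) {α β : ℂ} (hα : -1 / 2 < α.re) (hβ : -1 / 2 < β.re) :
    (2 * α + 1) * (2 * β + 1) * (α + 1) * (β + 1) *
        betaFn (2 * α + 1) (2 * β + 1) * ascPoch (α + β + 3 / 2 + 2) l =
      2 * (1 + α + β) * (2 + α + β) * (2 * l + 2 * (α + β) + 5) *
        betaFn (2 * α + 1 + 2) (2 * β + 1 + 2) * ascPoch (α + β + 3 / 2) (l + 1) := by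
  have hbeta := betaFn_add_two_add_two (a := 2 * α + 1) (b := 2 * β + 1)
    (by simp; linarith) (by simp; linarith)
  linear_combination -ascPoch (α + β + 3 / 2 + 2) l / 4 * hbeta +
    4 * (1 + α + β) * (2 + α + β) * betaFn (2 * α + 1 + 2) (2 * β + 1 + 2) *
      mul_ascPoch_add_two (α + β + 3 / 2) l

/-- The closed form of the weighted square integral of the Jacobi polynomial `P_l^{(α, β)}`. -/
noncomputable def jacobiSqValue (l : ℕ) (α β : ℂ) : ℂ :=
  2 ^ (2 * α + 2 * β + 1) * ascPoch (1 / 2) l / (l.factorial : ℂ) ^ 2 *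
    betaFn (2 * α + 1) (2 * β + 1) *
    (ascPoch (α + 1) l * ascPoch (β + 1) l / ascPoch (α + β + 3 / 2) l)

lemma jacobiSqValue_succ (l : ℕ) {α β : ℂ} (hα : -1 / 2 < α.re) (hβ : -1 / 2 < β.re) :
    16 * (2 * α + 1) * (2 * β + 1) * (l + 1) ^ 2 * jacobiSqValue (l + 1) α β =
      (1 + α + β) * (2 + α + β) * (2 * l + 1) * (2 * l + 2 * (α + β) + 5) *
        jacobiSqValue l (α + 1) (β + 1) := by
  have hpow : (2 : ℂ) ^ (2 * (α + 1) + 2 * (β + 1) + 1) = 2 ^ 4 * 2 ^ (2 * α + 2 * β + 1) := by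
    rw [← Complex.cpow_ofNat, ← Complex.cpow_add _ _ two_ne_zero]
    ring_nf
  have hα₂ : 2 * (α + 1) + 1 = 2 * α + 1 + 2 := by ring
  have hβ₂ : 2 * (β + 1) + 1 = 2 * β + 1 + 2 := by ring
  have hαβ : α + 1 + (β + 1) + 3 / 2 = α + β + 3 / 2 + 2 := by ring
  have hs : 0 < (α + β + 3 / 2).re := by
    simp only [Complex.add_re, Complex.div_ofNat_re, Complex.re_ofNat]
    linarith
  have hden : ascPoch (α + β + 3 / 2) (l + 1) ≠ 0 := ascPoch_ne_zero hs _
  have hden₂ : ascPoch (α + β + 3 / 2 + 2) l ≠ 0 :=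
    ascPoch_ne_zero (by simpa using add_pos hs two_pos) _
  have hl : (l : ℂ) + 1 ≠ 0 := l.cast_add_one_ne_zero
  have hfact : (l.factorial : ℂ) ≠ 0 := Nat.cast_ne_zero.2 l.factorial_ne_zero
  have hratio := betaFn_mul_ascPoch_add_two l hα hβ
  rw [jacobiSqValue, jacobiSqValue, hpow, hα₂, hβ₂, hαβ, ascPoch_succ_right (1 / 2),
    ascPoch_succ_left (α + 1), ascPoch_succ_left (β + 1), Nat.factorial_succ]
  push_cast
  -- `field_simp` would otherwise normalize inside the arguments and no longer match `hratio`.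
  generalize ascPoch (α + β + 3 / 2) (l + 1) = denom at *
  generalize ascPoch (α + β + 3 / 2 + 2) l = denom₂ at *
  generalize betaFn (2 * α + 1 + 2) (2 * β + 1 + 2) = beta₂ at *
  field_simp
  linear_combination (16 * (2 * (l : ℂ) + 1) * ascPoch (1 / 2) l * ascPoch (α + 1 + 1) l *
    ascPoch (β + 1 + 1) l) * hratio

lemma jacobiIntegral_jacobiPoly_sq (l : ℕ) {α β : ℂ}
    (hα : -1 / 2 < α.re) (hβ : -1 / 2 < β.re) :
    jacobiIntegral (2 * α) (2 * β) (jacobiPoly l α β ^ 2) = jacobiSqValue l α β := by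
  have ha : 0 < (2 * α + 1).re := by simp; linarith
  have hb : 0 < (2 * β + 1).re := by simp; linarith
  induction l generalizing α β with
  | zero =>
    have := jacobiIntegral_one (a := 2 * α) (b := 2 * β) (by simp; linarith) (by simp; linarith)
    simpa [jacobiPoly, rodriguesPoly, jacobiSqValue, ascPoch] using this
  | succ l ih =>
    have hcoeff : 16 * (2 * α + 1) * (2 * β + 1) * ((l : ℂ) + 1) ^ 2 ≠ 0 := by
      simp [Complex.ne_zero_of_re_pos ha, Complex.ne_zero_of_re_pos hb, l.cast_add_one_ne_zero]
    refine mul_left_cancel₀ hcoeff ?_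
    rw [jacobiIntegral_jacobiPoly_succ_sq l hα hβ, jacobiSqValue_succ l hα hβ,
      ih (by simp; linarith) (by simp; linarith) (by simp; linarith) (by simp; linarith)]

end ClosedForm

theorem stmt0 (l : ℕ) (α β : ℂ) (hα : α.re > -1/2) (hβ : β.re > -1/2) :
    ∫ t in (-1 : ℝ)..1, (jacobiP l α β t) ^ 2 * (1 - (t : ℂ)) ^ (2 * α) * (1 + (t : ℂ)) ^ (2 * β)
      = (2 : ℂ) ^ (2 * α + 2 * β + 1) * ascPoch (1/2) l / ((l.factorial : ℂ)) ^ 2 *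
        betaFn (2 * α + 1) (2 * β + 1) *
        (ascPoch (α + 1) l * ascPoch (β + 1) l / ascPoch (α + β + 3/2) l) := by
  change _ = jacobiSqValue l α β
  rw [← jacobiIntegral_jacobiPoly_sq l hα hβ, jacobiIntegral]
  refine intervalIntegral.integral_congr_Ioo_of_le (by norm_num) fun t ht => ?_
  simp only [jacobiP_eq_eval_jacobiPoly l α β ht, jacobiWeight, eval_pow]
  ring
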